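/- Let Γ be a finite rooted tree that is a chain (every vertex has at most one child), with ⪰-maximal vertex q_max, and let ⤳ be a binary relation on its vertices satisfying the P-Enriques-diagram conditions (P1), (P2), (P3). Then there exist an integer d ≥ 2 and a d-weighting α of Γ with ⤳_α = ⤳ if and only if the proximity index is non-decreasing, i.e. ind(r) ≥ ind(q) whenever r ⪰ q; and in that case the minimum such d equals max(2, ind(q_max)). (Combinatorial form of the Corollary: a P-Enriques diagram whose graph is a chain is toric iff the proximity index is non-decreasing, and then the minimum dimension of an associated constellation is the index of the terminal point, and at least 2.) -/

import Mathlib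

/-- A finite rooted tree: a distinguished root, a parent map fixing the root,
and a depth function witnessing that iterating the parent map reaches the root. -/
structure PTree (V : Type) where
  root : V
  parent : V → V
  depth : V → ℕ
  parent_root : parent root = root
  depth_root : depth root = 0
  depth_eq : ∀ v, v ≠ root → depth v = depth (parent v) + 1

namespace PTree

variable {V : Type}

/-- `r ⪰ q` : the descendancy order (`q` lies on the path from `r` to the root). -/
def desc (T : PTree V) (r q : V) : Prop := ∃ k : ℕ, T.parent^[k] r = q

/-- `r ≻ q`. -/
def sdesc (T : PTree V) (r q : V) : Prop := T.desc r q ∧ r ≠ q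

/-- `r ∈ q⁺` : `r` is a child of `q`. -/
def child (T : PTree V) (r q : V) : Prop := T.parent r = q ∧ r ≠ T.root

/-- `w` is a d-weighting of `T` : each non-root vertex gets a weight in `{1,…,d}`,
and distinct children of a common vertex get distinct weights. -/
def IsWeighting (T : PTree V) (d : ℕ) (w : V → ℕ) : Prop :=
  (∀ v, v ≠ T.root → 1 ≤ w v ∧ w v ≤ d) ∧
    ∀ r s, r ≠ T.root → s ≠ T.root → T.parent r = T.parent s → r ≠ s → w r ≠ w s

/-- The length of the path (code) from `q` up to a descendant `r`. -/
def codeLen (T : PTree V) (r q : V) : ℕ := T.depth r - T.depth q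

/-- The proximity relation induced by a weighting: `r ⤳_α q` iff `r ≻ q` and the first
entry of the code of `r` over `q` differs from all the later entries.  (The `j`-th entry
of the code, `1 ≤ j ≤ k`, is the weight of `parent^[k-j] r`, where `k` is the code length.) -/
def prox (T : PTree V) (w : V → ℕ) (r q : V) : Prop :=
  T.sdesc r q ∧ ∀ i, i + 2 ≤ T.codeLen r q →
    w (T.parent^[T.codeLen r q - 1] r) ≠ w (T.parent^[i] r)

end PTree

/-- The proximity index of `q` : the number of vertices `p` with `q ⤳ p`. -/
noncomputable def ind {V : Type} (rel : V → V → Prop) (q : V) : ℕ :=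
  Nat.card {p : V // rel q p}

/-- `s(q)` : the number of children of `q` whose proximity index exceeds that of `q`. -/
noncomputable def PTree.sInd {V : Type} (T : PTree V) (rel : V → V → Prop) (q : V) : ℕ :=
  Nat.card {r : V // T.child r q ∧ ind rel q < ind rel r}

/-- The P-Enriques-diagram conditions (P1), (P2), (P3) on a binary relation `rel`. -/
def PTree.Enriques {V : Type} (T : PTree V) (rel : V → V → Prop) : Prop :=
  (∀ q p, rel q p → T.sdesc q p) ∧
  (∀ q p, T.child q p → rel q p) ∧
  (∀ r p q, T.desc r p → T.sdesc p q → rel r q → rel p q)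

/-- Condition (a): the proximity index is non-decreasing along the descendancy order. -/
def PTree.CondA {V : Type} (T : PTree V) (rel : V → V → Prop) : Prop :=
  ∀ r q, T.desc r q → ind rel q ≤ ind rel r

/-- Condition (b): whenever `r ⤳ q`, at most one child `s` of `r` satisfies `¬ s ⤳ q`. -/
def PTree.CondB {V : Type} (T : PTree V) (rel : V → V → Prop) : Prop :=
  ∀ r q, rel r q → ∀ s s', T.child s r → T.child s' r → ¬ rel s q → ¬ rel s' q → s = s'

/-!
Along any branch, passing from `p` to a child `r` adds `p` to the set of vertices to which `r` is
proximate and drops some of the vertices to which `p` is proximate.  The number of dropped vertices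
is therefore at most one exactly when the proximity index does not decrease.

For the relation induced by a weighting, `q` is dropped exactly when the weight of `r` repeats the
first entry of the code of `p` over `q`.  These first entries are distinct for distinct `q` with
`p ⤳ q`, so at most one `q` is dropped, and the index never exceeds the number of weights.

Conversely, if at most one vertex is ever dropped, weights can be assigned from the root upwards:
`r` repeats the first entry of the code over the dropped vertex, or receives the fresh weight
`ind r` when nothing is dropped.  Weights then never exceed the index, so no more than `ind qmax`
of them occur.
-/

namespace PTree

section Descendancy

variable {V : Type} {T : PTree V} {r q : V}

theorem depth_parent (T : PTree V) (r : V) : T.depth (T.parent r) = T.depth r - 1 := by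
  by_cases hr : r = T.root
  · rw [hr, T.parent_root, T.depth_root]
  · rw [T.depth_eq r hr, Nat.add_sub_cancel]

theorem depth_iterate_parent (T : PTree V) (k : ℕ) (r : V) :
    T.depth (T.parent^[k] r) = T.depth r - k := by
  induction k with
  | zero => rfl
  | succ k ih => rw [Function.iterate_succ_apply', depth_parent, ih, Nat.sub_sub]

theorem depth_eq_zero_iff : T.depth r = 0 ↔ r = T.root := by
  refine ⟨fun h => ?_, fun h => h ▸ T.depth_root⟩
  by_contra hr
  have := T.depth_eq r hr
  omega

theorem parent_induction (T : PTree V) {motive : V → Prop} (root : motive T.root)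
    (step : ∀ r, r ≠ T.root → motive (T.parent r) → motive r) (r : V) : motive r := by
  induction h : T.depth r generalizing r with
  | zero => exact depth_eq_zero_iff.1 h ▸ root
  | succ n ih =>
    have hr : r ≠ T.root := fun hr => by simp [hr, T.depth_root] at h
    exact step r hr (ih _ (by rw [depth_parent, h, Nat.add_sub_cancel]))

theorem desc_refl (T : PTree V) (r : V) : T.desc r r := ⟨0, rfl⟩

theorem desc_parent (T : PTree V) (r : V) : T.desc r (T.parent r) := ⟨1, rfl⟩

theorem desc.trans {p : V} (hrp : T.desc r p) (hpq : T.desc p q) : T.desc r q := by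
  obtain ⟨k, rfl⟩ := hrp
  obtain ⟨l, rfl⟩ := hpq
  exact ⟨l + k, Function.iterate_add_apply _ _ _ _⟩

theorem desc.depth_le (h : T.desc r q) : T.depth q ≤ T.depth r := by
  obtain ⟨k, rfl⟩ := h
  rw [depth_iterate_parent]
  exact Nat.sub_le _ _

theorem desc.iterate_codeLen (h : T.desc r q) : T.parent^[T.codeLen r q] r = q := by
  obtain ⟨k, hk⟩ := h
  have hdepth : T.depth q = T.depth r - k := by rw [← hk, depth_iterate_parent]
  rcases le_total k (T.depth r) with hkr | hkr
  · rw [codeLen, hdepth, Nat.sub_sub_self hkr, hk]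
  -- A path longer than the depth stays at the root.
  · have hq : T.depth q = 0 := by omega
    rw [depth_eq_zero_iff.1 hq, ← depth_eq_zero_iff, depth_iterate_parent, codeLen,
      T.depth_root, Nat.sub_zero, Nat.sub_self]

theorem finite_setOf_desc (T : PTree V) (r : V) : {q | T.desc r q}.Finite :=
  ((Set.finite_Iic (T.depth r)).image (T.parent^[·] r)).subset
    fun _ hq => ⟨_, Nat.sub_le _ _, hq.iterate_codeLen⟩

theorem sdesc.depth_lt (h : T.sdesc r q) : T.depth q < T.depth r := by
  refine h.1.depth_le.lt_of_ne fun heq => h.2 ?_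
  simpa only [codeLen, heq, Nat.sub_self, Function.iterate_zero_apply] using h.1.iterate_codeLen

theorem not_sdesc_self (T : PTree V) (r : V) : ¬ T.sdesc r r := fun h => h.2 rfl

theorem sdesc_iff_desc_parent (hr : r ≠ T.root) : T.sdesc r q ↔ T.desc (T.parent r) q := by
  constructor
  · rintro ⟨⟨_ | k, hk⟩, hne⟩
    · exact absurd hk hne
    · exact ⟨k, hk⟩
  · refine fun h => ⟨(T.desc_parent r).trans h, ?_⟩
    rintro rfl
    have := h.depth_le
    have := T.depth_eq r hr
    omega

theorem sdesc_iff_eq_or_sdesc_parent (hr : r ≠ T.root) :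
    T.sdesc r q ↔ q = T.parent r ∨ T.sdesc (T.parent r) q := by
  rw [sdesc_iff_desc_parent hr]
  constructor
  · intro h
    by_cases hq : q = T.parent r
    · exact .inl hq
    · exact .inr ⟨h, Ne.symm hq⟩
  · rintro (rfl | h)
    · exact T.desc_refl _
    · exact h.1

theorem codeLen_of_sdesc_parent (h : T.sdesc (T.parent r) q) :
    T.codeLen r q = T.codeLen (T.parent r) q + 1 := by
  have := h.depth_lt
  rw [depth_parent] at this
  rw [codeLen, codeLen, depth_parent]
  omega

end Descendancy

section ChildToward

variable {V : Type} {T : PTree V} {r q : V}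

/-- For `r ≻ q`, the child of `q` on the path from `q` to `r`; its weight is the first entry of
the code of `r` over `q`. -/
def childToward (T : PTree V) (r q : V) : V := T.parent^[T.codeLen r q - 1] r

theorem desc_childToward (T : PTree V) (r q : V) : T.desc r (T.childToward r q) := ⟨_, rfl⟩

theorem sdesc.childToward_ne_root (h : T.sdesc r q) : T.childToward r q ≠ T.root := by
  have := h.depth_lt
  rw [Ne, ← depth_eq_zero_iff, childToward, depth_iterate_parent, codeLen]
  omega

theorem childToward_of_sdesc_parent (h : T.sdesc (T.parent r) q) :
    T.childToward r q = T.childToward (T.parent r) q := by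
  have hpos : 0 < T.codeLen (T.parent r) q := Nat.sub_pos_of_lt h.depth_lt
  rw [childToward, childToward, codeLen_of_sdesc_parent h, ← Function.iterate_succ_apply]
  congr 2
  omega

end ChildToward

section Prox

variable {V : Type} {T : PTree V} {w : V → ℕ} {r q : V}

theorem prox_iff_eq_parent_or (hr : r ≠ T.root) :
    T.prox w r q ↔ q = T.parent r ∨
      T.prox w (T.parent r) q ∧ w (T.childToward (T.parent r) q) ≠ w r := by
  rw [prox, sdesc_iff_eq_or_sdesc_parent hr, or_and_right]
  refine or_congr ?_ ?_
  · refine and_iff_left_of_imp fun hq i hi => ?_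
    rw [hq, codeLen, depth_parent] at hi
    omega
  · rw [prox, and_assoc]
    refine and_congr_right fun hq => ?_
    have hpos : 0 < T.codeLen (T.parent r) q := Nat.sub_pos_of_lt hq.depth_lt
    change (∀ i, _ → w (T.childToward r q) ≠ _) ↔
      (∀ i, _ → w (T.childToward (T.parent r) q) ≠ _) ∧ _
    rw [childToward_of_sdesc_parent hq, codeLen_of_sdesc_parent hq]
    constructor
    · exact fun h => ⟨fun i hi => h (i + 1) (by omega), h 0 (by omega)⟩
    · rintro ⟨hlater, hlast⟩ (_ | i) hi
      · exact hlast
      · exact hlater i (by omega)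

theorem prox.weight_childToward_ne {q' : V} (hq : T.prox w r q) (hq' : T.sdesc r q')
    (hlt : T.codeLen r q' < T.codeLen r q) :
    w (T.childToward r q) ≠ w (T.childToward r q') := by
  have hpos : 0 < T.codeLen r q' := Nat.sub_pos_of_lt hq'.depth_lt
  exact hq.2 (T.codeLen r q' - 1) (by omega)

theorem injOn_weight_childToward (T : PTree V) (w : V → ℕ) (r : V) :
    Set.InjOn (fun q => w (T.childToward r q)) {q | T.prox w r q} := by
  intro q hq q' hq' heq
  rcases lt_trichotomy (T.codeLen r q) (T.codeLen r q') with hlt | hlen | hlt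
  · exact absurd heq.symm (prox.weight_childToward_ne hq' hq.1 hlt)
  · rw [← hq.1.1.iterate_codeLen, hlen, hq'.1.1.iterate_codeLen]
  · exact absurd heq (prox.weight_childToward_ne hq hq'.1 hlt)

theorem prox_parent_of_prox (h : T.prox w r q) (hp : T.sdesc (T.parent r) q) :
    T.prox w (T.parent r) q := by
  by_cases hr : r = T.root
  · rwa [hr, T.parent_root, ← hr]
  · rcases (prox_iff_eq_parent_or hr).1 h with rfl | h
    · exact absurd hp (T.not_sdesc_self _)
    · exact h.1

theorem prox.of_desc {p : V} (h : T.prox w r q) (hrp : T.desc r p) (hpq : T.sdesc p q) :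
    T.prox w p q := by
  obtain ⟨k, rfl⟩ := hrp
  induction k with
  | zero => exact h
  | succ k ih =>
    rw [Function.iterate_succ_apply'] at hpq ⊢
    have hk : T.sdesc (T.parent^[k] r) q := by
      refine ⟨(T.desc_parent _).trans hpq.1, fun heq => ?_⟩
      have hlt := hpq.depth_lt
      rw [depth_parent, heq] at hlt
      omega
    exact prox_parent_of_prox (ih hk) hpq

theorem enriques_prox (T : PTree V) (w : V → ℕ) : T.Enriques (T.prox w) :=
  ⟨fun _ _ h => h.1, fun _ _ h => (prox_iff_eq_parent_or h.2).2 (.inl h.1.symm),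
    fun _ _ _ hrp hpq h => h.of_desc hrp hpq⟩

theorem IsWeighting.ind_prox_le {d : ℕ} (hw : T.IsWeighting d w) (r : V) :
    ind (T.prox w) r ≤ d := by
  have hmaps : ∀ q ∈ {q | T.prox w r q}, w (T.childToward r q) ∈ (Finset.Icc 1 d : Set ℕ) :=
    fun q hq => Finset.mem_coe.2 (Finset.mem_Icc.2 (hw.1 _ hq.1.childToward_ne_root))
  calc ind (T.prox w) r ≤ (Finset.Icc 1 d : Set ℕ).ncard :=
        Set.ncard_le_ncard_of_injOn _ hmaps (T.injOn_weight_childToward w r)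
    _ = d := by rw [Set.ncard_coe_finset, Nat.card_Icc, Nat.add_sub_cancel]

end Prox

section Dropped

variable {V : Type} {T : PTree V} {rel : V → V → Prop} {r q : V}

/-- The vertices to which the parent of `r` is proximate but `r` is not.  Since the root is its own
parent, nothing is dropped at the root. -/
def dropped (T : PTree V) (rel : V → V → Prop) (r : V) : Set V :=
  {q | rel (T.parent r) q ∧ ¬ rel r q}

theorem ne_root_of_mem_dropped (h : q ∈ T.dropped rel r) : r ≠ T.root := by
  rintro rfl
  exact h.2 (T.parent_root ▸ h.1)

theorem Enriques.not_rel_root (hE : T.Enriques rel) (q : V) : ¬ rel T.root q := fun h => by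
  have := (hE.1 _ _ h).depth_lt
  rw [T.depth_root] at this
  omega

theorem Enriques.rel_parent (hE : T.Enriques rel) (hr : r ≠ T.root) : rel r (T.parent r) :=
  hE.2.1 _ _ ⟨rfl, hr⟩

theorem Enriques.not_rel_self (hE : T.Enriques rel) (r : V) : ¬ rel r r :=
  fun h => T.not_sdesc_self r (hE.1 _ _ h)

theorem Enriques.eq_parent_or_rel_parent (hE : T.Enriques rel) (hr : r ≠ T.root) (h : rel r q) :
    q = T.parent r ∨ rel (T.parent r) q :=
  ((sdesc_iff_eq_or_sdesc_parent hr).1 (hE.1 _ _ h)).imp_right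
    fun hq => hE.2.2 _ _ _ (T.desc_parent r) hq h

theorem Enriques.finite_setOf_rel (hE : T.Enriques rel) (r : V) : {q | rel r q}.Finite :=
  (T.finite_setOf_desc r).subset fun _ h => (hE.1 _ _ h).1

theorem Enriques.finite_dropped (hE : T.Enriques rel) (r : V) : (T.dropped rel r).Finite :=
  (hE.finite_setOf_rel (T.parent r)).subset fun _ h => h.1

theorem Enriques.ind_add_ncard_dropped (hE : T.Enriques rel) (hr : r ≠ T.root) :
    ind rel r + (T.dropped rel r).ncard = ind rel (T.parent r) + 1 := by
  have hunion : {q | rel r q} ∪ T.dropped rel r = insert (T.parent r) {q | rel (T.parent r) q} := by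
    ext q
    constructor
    · rintro (h | h)
      · exact hE.eq_parent_or_rel_parent hr h
      · exact .inr h.1
    · rintro (rfl | h)
      · exact .inl (hE.rel_parent hr)
      · by_cases hq : rel r q
        · exact .inl hq
        · exact .inr ⟨h, hq⟩
  have hdisj : Disjoint {q | rel r q} (T.dropped rel r) :=
    Set.disjoint_left.2 fun _ h h' => h'.2 h
  calc ind rel r + (T.dropped rel r).ncard
      = ({q | rel r q} ∪ T.dropped rel r).ncard :=
        (Set.ncard_union_eq hdisj (hE.finite_setOf_rel r) (hE.finite_dropped r)).symm
    _ = (insert (T.parent r) {q | rel (T.parent r) q}).ncard := by rw [hunion]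
    _ = ind rel (T.parent r) + 1 :=
        Set.ncard_insert_of_notMem (hE.not_rel_self _) (hE.finite_setOf_rel _)

theorem condA_iff_ind_parent_le : T.CondA rel ↔ ∀ r, ind rel (T.parent r) ≤ ind rel r := by
  refine ⟨fun h r => h _ _ (T.desc_parent r), ?_⟩
  rintro h r _ ⟨k, rfl⟩
  induction k with
  | zero => exact le_rfl
  | succ k ih => exact Function.iterate_succ_apply' T.parent k r ▸ (h _).trans ih

theorem Enriques.condA_iff_dropped_subsingleton (hE : T.Enriques rel) :
    T.CondA rel ↔ ∀ r, (T.dropped rel r).Subsingleton := by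
  rw [condA_iff_ind_parent_le]
  refine forall_congr' fun r => ?_
  by_cases hr : r = T.root
  · have hempty : T.dropped rel r = ∅ :=
      Set.eq_empty_of_forall_notMem fun _ h => ne_root_of_mem_dropped h hr
    have hind : ind rel (T.parent r) = ind rel r := by rw [hr, T.parent_root]
    exact iff_of_true hind.le (hempty ▸ Set.subsingleton_empty)
  · have hcount := hE.ind_add_ncard_dropped hr
    have := (hE.finite_dropped r).to_subtype
    rw [← Set.ncard_le_one_iff_subsingleton]
    omega

theorem condA_prox (T : PTree V) (w : V → ℕ) : T.CondA (T.prox w) := by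
  refine (T.enriques_prox w).condA_iff_dropped_subsingleton.2 fun r q hq q' hq' => ?_
  have hr := ne_root_of_mem_dropped hq
  have weight_eq : ∀ p ∈ T.dropped (T.prox w) r, w (T.childToward (T.parent r) p) = w r :=
    fun p hp => by_contra fun hne => hp.2 ((prox_iff_eq_parent_or hr).2 (.inr ⟨hp.1, hne⟩))
  exact T.injOn_weight_childToward w _ hq.1 hq'.1 ((weight_eq q hq).trans (weight_eq q' hq').symm)

end Dropped

section GreedyWeight

variable {V : Type} {T : PTree V} {rel : V → V → Prop} {r q : V}

theorem depth_childToward_parent_lt (hr : r ≠ T.root) (q : V) :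
    T.depth (T.childToward (T.parent r) q) < T.depth r :=
  (T.desc_childToward _ _).depth_le.trans_lt (by rw [T.depth_eq r hr]; exact Nat.lt_succ_self _)

open Classical in
/-- The weighting that realizes `rel` when the proximity index is non-decreasing: `r` repeats the
first entry of the code over a dropped vertex, and receives the fresh weight `ind r` if no vertex is
dropped.  The choice of the dropped vertex is immaterial as soon as there is at most one. -/
noncomputable def greedyWeight (T : PTree V) (rel : V → V → Prop) (r : V) : ℕ :=
  if h : (T.dropped rel r).Nonempty then
    T.greedyWeight rel (T.childToward (T.parent r) h.some)
  else ind rel r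
termination_by T.depth r
decreasing_by exact depth_childToward_parent_lt (ne_root_of_mem_dropped h.some_mem) _

theorem greedyWeight_of_mem_dropped (hr : (T.dropped rel r).Subsingleton)
    (hq : q ∈ T.dropped rel r) :
    T.greedyWeight rel r = T.greedyWeight rel (T.childToward (T.parent r) q) := by
  have hne : (T.dropped rel r).Nonempty := ⟨q, hq⟩
  rw [greedyWeight, dif_pos hne, hr hne.some_mem hq]

theorem greedyWeight_of_dropped_eq_empty (h : T.dropped rel r = ∅) :
    T.greedyWeight rel r = ind rel r := by
  rw [greedyWeight, dif_neg (Set.not_nonempty_iff_eq_empty.2 h)]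

theorem CondA.greedyWeight_le_ind (hA : T.CondA rel) (r : V) :
    T.greedyWeight rel r ≤ ind rel r := by
  induction r using greedyWeight.induct T rel with
  | case1 r h ih =>
    rw [greedyWeight, dif_pos h]
    exact ih.trans (hA _ _ ((T.desc_parent r).trans (T.desc_childToward _ _)))
  | case2 r h => rw [greedyWeight, dif_neg h]

theorem Enriques.one_le_greedyWeight (hE : T.Enriques rel) (hr : r ≠ T.root) :
    1 ≤ T.greedyWeight rel r := by
  induction r using greedyWeight.induct T rel with
  | case1 r h ih =>
    rw [greedyWeight, dif_pos h]
    exact ih (hE.1 _ _ h.some_mem.1).childToward_ne_root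
  | case2 r h =>
    rw [greedyWeight, dif_neg h]
    exact (Set.ncard_pos (hE.finite_setOf_rel r)).2 ⟨_, hE.rel_parent hr⟩

theorem Enriques.rel_iff_greedyWeight_ne (hE : T.Enriques rel) (hA : T.CondA rel)
    (hr : r ≠ T.root) (hq : rel (T.parent r) q)
    (hprox : ∀ p, T.prox (T.greedyWeight rel) (T.parent r) p ↔ rel (T.parent r) p) :
    rel r q ↔ T.greedyWeight rel (T.childToward (T.parent r) q) ≠ T.greedyWeight rel r := by
  have hsub := hE.condA_iff_dropped_subsingleton.1 hA r
  rcases (T.dropped rel r).eq_empty_or_nonempty with hempty | ⟨p, hp⟩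
  · have hrel : rel r q := by_contra fun h => Set.eq_empty_iff_forall_notMem.1 hempty q ⟨hq, h⟩
    have hind : ind rel r = ind rel (T.parent r) + 1 := by
      simpa only [hempty, Set.ncard_empty, add_zero] using hE.ind_add_ncard_dropped hr
    have hlt : T.greedyWeight rel (T.childToward (T.parent r) q) < T.greedyWeight rel r :=
      calc T.greedyWeight rel (T.childToward (T.parent r) q)
          ≤ ind rel (T.childToward (T.parent r) q) := hA.greedyWeight_le_ind _
        _ ≤ ind rel (T.parent r) := hA _ _ (T.desc_childToward _ _)
        _ < ind rel r := hind ▸ Nat.lt_succ_self _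
        _ = T.greedyWeight rel r := (greedyWeight_of_dropped_eq_empty hempty).symm
    exact iff_of_true hrel hlt.ne
  · have hweight : T.greedyWeight rel (T.childToward (T.parent r) q) = T.greedyWeight rel r ↔
        q = p := by
      rw [greedyWeight_of_mem_dropped hsub hp]
      exact (T.injOn_weight_childToward _ _).eq_iff ((hprox q).2 hq) ((hprox p).2 hp.1)
    rw [Ne, hweight]
    exact ⟨fun h hqp => hp.2 (hqp ▸ h), fun hqp => by_contra fun h => hqp (hsub ⟨hq, h⟩ hp)⟩

theorem Enriques.prox_greedyWeight_iff (hE : T.Enriques rel) (hA : T.CondA rel) (r q : V) :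
    T.prox (T.greedyWeight rel) r q ↔ rel r q := by
  induction r using T.parent_induction generalizing q with
  | root => exact iff_of_false ((T.enriques_prox _).not_rel_root q) (hE.not_rel_root q)
  | step r hr ih =>
    have hstep (hq : rel (T.parent r) q) := hE.rel_iff_greedyWeight_ne hA hr hq ih
    rw [prox_iff_eq_parent_or hr, ih]
    constructor
    · rintro (rfl | ⟨hq, hne⟩)
      · exact hE.rel_parent hr
      · exact (hstep hq).2 hne
    · exact fun h => (hE.eq_parent_or_rel_parent hr h).imp_right fun hq => ⟨hq, (hstep hq).1 h⟩

end GreedyWeight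

end PTree

/-- Let `Γ` be a finite rooted tree which is a chain (every vertex has at
most one child), with `⪰`-maximal vertex `qmax`, and let `⤳` satisfy the
P-Enriques-diagram conditions.  Then some `d`-weighting (`d ≥ 2`) induces `⤳` iff the
proximity index is non-decreasing; and in that case the minimum such `d` is
`max (2, ind qmax)`. -/
theorem toric_PEnriques_chain {V : Type} [Fintype V] (T : PTree V)
    (rel : V → V → Prop) (hE : T.Enriques rel)
    (hchain : ∀ q r s, T.child r q → T.child s q → r = s)
    (qmax : V) (hqmax : ∀ v, T.desc qmax v) :
    ((∃ d : ℕ, 2 ≤ d ∧ ∃ w : V → ℕ, T.IsWeighting d w ∧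
        ∀ r q, T.prox w r q ↔ rel r q) ↔ T.CondA rel) ∧
    (T.CondA rel →
      IsLeast {d : ℕ | 2 ≤ d ∧ ∃ w : V → ℕ, T.IsWeighting d w ∧
          ∀ r q, T.prox w r q ↔ rel r q}
        (max 2 (ind rel qmax))) := by
  have realizes (hA : T.CondA rel) : 2 ≤ max 2 (ind rel qmax) ∧ ∃ w : V → ℕ,
      T.IsWeighting (max 2 (ind rel qmax)) w ∧ ∀ r q, T.prox w r q ↔ rel r q := by
    refine ⟨le_max_left _ _, T.greedyWeight rel, ⟨fun v hv => ⟨hE.one_le_greedyWeight hv, ?_⟩, ?_⟩,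
      hE.prox_greedyWeight_iff hA⟩
    · calc T.greedyWeight rel v ≤ ind rel v := hA.greedyWeight_le_ind v
        _ ≤ ind rel qmax := hA _ _ (hqmax v)
        _ ≤ max 2 (ind rel qmax) := le_max_right _ _
    · exact fun r s hr hs hparent hne => absurd (hchain _ r s ⟨hparent, hr⟩ ⟨rfl, hs⟩) hne
  have rel_eq {w : V → ℕ} (hw : ∀ r q, T.prox w r q ↔ rel r q) : T.prox w = rel :=
    funext₂ fun r q => propext (hw r q)
  refine ⟨⟨?_, fun hA => ⟨_, realizes hA⟩⟩, fun hA => ⟨realizes hA, ?_⟩⟩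
  · rintro ⟨d, -, w, -, hw⟩
    exact rel_eq hw ▸ T.condA_prox w
  · rintro d ⟨hd, w, hweighting, hw⟩
    exact max_le hd (rel_eq hw ▸ hweighting.ind_prox_le qmax)
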